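/- Let (ε_n)_{n=1}^∞ be a sequence of positive real numbers with lim_{n→∞} n·ε_n = ∞. Then there exists a (1+ε_n)-bounded M-basis {x_n, x_n*}_{n∈ℕ} of the real Hilbert space ℓ² such that for every permutation σ of ℕ and every constant C ≥ 1 there exist finite sets E ⊆ F ⊆ ℕ with every element of E smaller than every element of F \ E, and signs δ_ν ∈ {−1, 1} for ν ∈ F, such that ‖Σ_{ν∈E} δ_ν x_{σ(ν)}‖ ≥ C · ‖Σ_{ν∈F} δ_ν x_{σ(ν)}‖. In particular, no permutation of (x_n) satisfies a uniform partial-sum bound, so no permutation of this M-basis is equivalent to a Schauder basis of ℓ². -/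

import Mathlib

open scoped BigOperators

/-!
Split `ℕ` into the dyadic blocks, the `j`-th of length `2 ^ j`, and let `x` be the image of an
orthonormal basis under the operator that multiplies the sum of the `j`-th block by `(t j)⁻¹` and
fixes every vector orthogonal to all these sums; the factors `t j` instead give the biorthogonal
functionals. A single basis vector carries only a `2 ^ (-j)` share of this distortion, so the bound
`1 + ε n` tolerates `t j ^ 2` up to `1 + 2 ^ j * ε n`, which tends to infinity because `n * ε n`
does. The sum of `x` over the whole block has norm `2 ^ (j / 2) / t j`, while the sum over *any*
half of it has norm at least `2 ^ (j / 2) / 2`. Since it does not matter which half this is, no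
reordering helps: the half that comes first exceeds the whole by a factor of at least `t j / 2`.
-/

open Filter Topology
open scoped ComplexConjugate Finset InnerProductSpace

section MarkushevichBasis

/-- A Markushevich basis: a biorthogonal system `(x, xs)` whose vectors span a dense subspace and
whose functionals separate points. -/
structure IsMarkushevichBasis (𝕜 : Type*) {ι E : Type*} [DecidableEq ι] [NormedField 𝕜]
    [SeminormedAddCommGroup E] [NormedSpace 𝕜 E] (x : ι → E) (xs : ι → E →L[𝕜] 𝕜) : Prop where
  biorthogonal : ∀ m n, xs m (x n) = if m = n then 1 else 0
  fundamental : (Submodule.span 𝕜 (Set.range x)).topologicalClosure = ⊤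
  total : ∀ v, (∀ n, xs n v = 0) → v = 0

variable {𝕜 ι H : Type*} [RCLike 𝕜] [NormedAddCommGroup H] [InnerProductSpace 𝕜 H]

lemma eq_zero_of_forall_inner_eq_zero {y : ι → H}
    (hy : (Submodule.span 𝕜 (Set.range y)).topologicalClosure = ⊤) {v : H}
    (hv : ∀ i, ⟪y i, v⟫_𝕜 = 0) : v = 0 := by
  refine (Submodule.dense_iff_topologicalClosure_eq_top.mpr hy).eq_zero_of_inner_right 𝕜 ?_
  have hle : Submodule.span 𝕜 (Set.range y) ≤ (𝕜 ∙ v)ᗮ :=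
    Submodule.span_le.mpr <| Set.range_subset_iff.mpr fun i ↦
      (Submodule.mem_orthogonal_singleton_iff_inner_left (𝕜 := 𝕜)).mpr (hv i)
  exact fun w hw ↦ Submodule.mem_orthogonal_singleton_iff_inner_left.mp (hle hw)

lemma isMarkushevichBasis_innerSL [DecidableEq ι] {x y : ι → H}
    (hyx : ∀ m n, ⟪y m, x n⟫_𝕜 = if m = n then 1 else 0)
    (hx : (Submodule.span 𝕜 (Set.range x)).topologicalClosure = ⊤)
    (hy : (Submodule.span 𝕜 (Set.range y)).topologicalClosure = ⊤) :
    IsMarkushevichBasis 𝕜 x fun n ↦ innerSL 𝕜 (y n) where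
  biorthogonal := hyx
  fundamental := hx
  total _ hv := eq_zero_of_forall_inner_eq_zero hy hv

end MarkushevichBasis

section InitialSums

/-- The initial sums of finite subfamilies of `z` are not controlled by the full sums: for every `C`
some `∑ ν ∈ F, z ν` has a part cut off at an index `m` of norm more than `C` times its own. The
strict inequality keeps the initial sum nonzero when the full sum vanishes. -/
def HasUnboundedInitialSums {E : Type*} [SeminormedAddCommGroup E] (z : ℕ → E) : Prop :=
  ∀ C : ℝ, ∃ (F : Finset ℕ) (m : ℕ), C * ‖∑ ν ∈ F, z ν‖ < ‖∑ ν ∈ F with ν < m, z ν‖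

namespace HasUnboundedInitialSums

variable {E : Type*} [SeminormedAddCommGroup E] {z : ℕ → E}

lemma exists_signed_sums (R : Type*) [Ring R] [Module R E] (hz : HasUnboundedInitialSums z)
    (C : ℝ) :
    ∃ (E F : Finset ℕ) (δ : ℕ → R), E ⊆ F ∧ (∀ ν ∈ E, ∀ l ∈ F \ E, ν < l) ∧
      (∀ ν ∈ F, δ ν = 1 ∨ δ ν = -1) ∧ C * ‖∑ ν ∈ F, δ ν • z ν‖ ≤ ‖∑ ν ∈ E, δ ν • z ν‖ := by
  obtain ⟨F, m, h⟩ := hz C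
  refine ⟨{ν ∈ F | ν < m}, F, fun _ ↦ 1, F.filter_subset _, fun ν hν l hl ↦ ?_,
    fun _ _ ↦ .inl rfl, by simpa only [one_smul] using h.le⟩
  grind

lemma not_partialSumBound (R : Type*) [Semiring R] [Module R E]
    (hz : HasUnboundedInitialSums z) :
    ¬ ∃ C : ℝ, ∀ m n : ℕ, m ≤ n → ∀ a : ℕ → R,
      ‖∑ i ∈ Finset.range m, a i • z i‖ ≤ C * ‖∑ i ∈ Finset.range n, a i • z i‖ := by
  rintro ⟨C, hC⟩
  obtain ⟨F, m, hlt⟩ := hz C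
  obtain ⟨N, hN⟩ := F.exists_nat_subset_range
  have hsum (k : ℕ) :
      ∑ i ∈ Finset.range k, (if i ∈ F then (1 : R) else 0) • z i = ∑ ν ∈ F with ν < k, z ν := by
    simp only [ite_smul, one_smul, zero_smul, ← Finset.sum_filter]
    congr 1
    grind
  have hfull : {ν ∈ F | ν < max m N} = F :=
    Finset.filter_true_of_mem fun ν hν ↦ lt_max_of_lt_right (Finset.mem_range.mp (hN hν))
  have hle := hC m (max m N) (le_max_left m N) fun i ↦ if i ∈ F then 1 else 0
  rw [hsum, hsum, hfull] at hle
  exact hlt.not_ge hle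

end HasUnboundedInitialSums

lemma exists_card_filter_lt_eq (F : Finset ℕ) {k : ℕ} (hk : k < #F) :
    ∃ m, #{ν ∈ F | ν < m} = k := by
  refine ⟨Nat.nth (· ∈ F) k, ?_⟩
  have hcount : Nat.count (· ∈ F) (Nat.nth (· ∈ F) k) = k :=
    Nat.count_nth fun hF ↦ by convert hk; ext; simp
  rw [Nat.count_eq_card_filter_range] at hcount
  convert hcount using 2
  grind

end InitialSums

/-- A partition of `ι` into finite blocks labelled by `κ`, given by the label of each element and
the block carrying each label; blocks may be empty. -/
structure BlockPartition (ι κ : Type*) where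
  index : ι → κ
  block : κ → Finset ι
  mem_block {i : ι} {k : κ} : i ∈ block k ↔ index i = k

namespace BlockPartition

variable {ι κ : Type*} (P : BlockPartition ι κ)

lemma mem_block_index (i : ι) : i ∈ P.block (P.index i) := P.mem_block.mpr rfl

lemma card_block_index_pos (i : ι) : 0 < #(P.block (P.index i)) :=
  Finset.card_pos.mpr ⟨i, P.mem_block_index i⟩

section Module

variable {𝕜 E : Type*} [Field 𝕜] [AddCommGroup E] [Module 𝕜 E]

/-- The family obtained from `e` by dilating, within the span of each block `k`, the direction of
the block sum by the factor `d k`: for orthonormal `e` this is the image of `e` under the operator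
that multiplies every block sum by its factor and fixes its orthogonal complement. -/
def dilate (d : κ → 𝕜) (e : ι → E) (i : ι) : E :=
  e i + ((d (P.index i) - 1) / #(P.block (P.index i))) • ∑ j ∈ P.block (P.index i), e j

variable {P} in
lemma dilate_of_mem_block (d : κ → 𝕜) (e : ι → E) {i : ι} {k : κ} (hi : i ∈ P.block k) :
    P.dilate d e i = e i + ((d k - 1) / #(P.block k)) • ∑ j ∈ P.block k, e j := by
  rw [dilate, P.mem_block.mp hi]

@[simp]
lemma dilate_one (e : ι → E) : P.dilate (1 : κ → 𝕜) e = e := by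
  ext i
  simp [dilate]

lemma span_range_dilate_le (d : κ → 𝕜) (e : ι → E) :
    Submodule.span 𝕜 (Set.range (P.dilate d e)) ≤ Submodule.span 𝕜 (Set.range e) := by
  have hmem (i : ι) : e i ∈ Submodule.span 𝕜 (Set.range e) := Submodule.subset_span ⟨i, rfl⟩
  refine Submodule.span_le.mpr <| Set.range_subset_iff.mpr fun i ↦ ?_
  exact add_mem (hmem i) (Submodule.smul_mem _ _ (sum_mem fun j _ ↦ hmem j))

variable [CharZero 𝕜]

lemma sum_block_dilate (d : κ → 𝕜) (e : ι → E) (k : κ) :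
    ∑ i ∈ P.block k, P.dilate d e i = d k • ∑ i ∈ P.block k, e i := by
  obtain hk | hk := (P.block k).eq_empty_or_nonempty
  · simp [hk]
  have hcard : (#(P.block k) : 𝕜) ≠ 0 := by simpa using hk.ne_empty
  rw [Finset.sum_congr rfl fun i hi ↦ dilate_of_mem_block d e hi, Finset.sum_add_distrib,
    Finset.sum_const, ← Nat.cast_smul_eq_nsmul 𝕜, smul_smul, mul_div_cancel₀ _ hcard, sub_smul,
    one_smul, add_sub_cancel]

lemma dilate_dilate (c d : κ → 𝕜) (e : ι → E) : P.dilate c (P.dilate d e) = P.dilate (c * d) e := by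
  ext i
  rw [dilate, sum_block_dilate, dilate, dilate, smul_smul, add_assoc, ← add_smul, Pi.mul_apply]
  congr 2
  ring

lemma span_range_dilate {d : κ → 𝕜} (hd : ∀ k, d k ≠ 0) (e : ι → E) :
    Submodule.span 𝕜 (Set.range (P.dilate d e)) = Submodule.span 𝕜 (Set.range e) := by
  refine (P.span_range_dilate_le d e).antisymm ?_
  have hinv : d⁻¹ * d = 1 := funext fun k ↦ inv_mul_cancel₀ (hd k)
  simpa only [dilate_dilate, hinv, dilate_one] using P.span_range_dilate_le d⁻¹ (P.dilate d e)

end Module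

section InnerProductSpace

variable {𝕜 H : Type*} [RCLike 𝕜] [NormedAddCommGroup H] [InnerProductSpace 𝕜 H] {e : ι → H}

lemma inner_sum_block [DecidableEq κ] (he : Orthonormal 𝕜 e) (i : ι) (k : κ) :
    ⟪e i, ∑ j ∈ P.block k, e j⟫_𝕜 = if P.index i = k then 1 else 0 := by
  classical
  simp [inner_sum, orthonormal_iff_ite.mp he, P.mem_block]

lemma inner_sum_block_sum_block [DecidableEq κ] (he : Orthonormal 𝕜 e) (k l : κ) :
    ⟪∑ i ∈ P.block k, e i, ∑ j ∈ P.block l, e j⟫_𝕜 = if k = l then (#(P.block k) : 𝕜) else 0 := by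
  rw [sum_inner, Finset.sum_congr rfl fun i hi ↦ by
    rw [P.inner_sum_block he, P.mem_block.mp hi]]
  simp

lemma inner_dilate_dilate [DecidableEq ι] [DecidableEq κ] (he : Orthonormal 𝕜 e) (c d : κ → 𝕜)
    (i j : ι) :
    ⟪P.dilate c e i, P.dilate d e j⟫_𝕜 = (if i = j then 1 else 0) +
      if P.index i = P.index j then
        (conj (c (P.index i)) * d (P.index i) - 1) / #(P.block (P.index i))
      else 0 := by
  have hcard : (#(P.block (P.index i)) : 𝕜) ≠ 0 := by exact_mod_cast (P.card_block_index_pos i).ne'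
  simp only [dilate, inner_add_left, inner_add_right, inner_smul_left, inner_smul_right,
    P.inner_sum_block he, P.inner_sum_block_sum_block he, orthonormal_iff_ite.mp he,
    ← inner_conj_symm (∑ _ ∈ _, _) (e j)]
  by_cases h : P.index i = P.index j
  · simp only [h, if_true, map_div₀, map_sub, map_one, map_natCast] at hcard ⊢
    field_simp
    ring
  · simp [h, Ne.symm h]

lemma norm_sq_sum_dilate (he : Orthonormal 𝕜 e) (d : κ → 𝕜) {k : κ} {s : Finset ι}
    (hs : s ⊆ P.block k) :
    ‖∑ i ∈ s, P.dilate d e i‖ ^ 2 = #s + #s ^ 2 * ((‖d k‖ ^ 2 - 1) / #(P.block k)) := by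
  classical
  have hinner : ∀ i ∈ s, ∀ j ∈ s, ⟪P.dilate d e i, P.dilate d e j⟫_𝕜 =
      (if i = j then 1 else 0) + ((‖d k‖ ^ 2 - 1) / #(P.block k) : 𝕜) := by
    intro i hi j hj
    rw [P.inner_dilate_dilate he, P.mem_block.mp (hs hi), P.mem_block.mp (hs hj), if_pos rfl,
      RCLike.conj_mul]
  rw [← RCLike.ofReal_inj (K := 𝕜)]
  push_cast
  rw [← inner_self_eq_norm_sq_to_K, sum_inner]
  simp only [inner_sum]
  rw [Finset.sum_congr rfl fun i hi ↦ Finset.sum_congr rfl (hinner i hi)]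
  simp only [Finset.sum_add_distrib, Finset.sum_ite_eq, Finset.sum_ite_mem, Finset.inter_self,
    Finset.sum_const, nsmul_eq_mul, mul_one]
  ring

lemma norm_sq_dilate_le (he : Orthonormal 𝕜 e) {d : κ → 𝕜} {i : ι} {δ : ℝ}
    (hd : ‖d (P.index i)‖ ^ 2 ≤ 1 + #(P.block (P.index i)) * δ) :
    ‖P.dilate d e i‖ ^ 2 ≤ 1 + δ := by
  have hcard : (0 : ℝ) < #(P.block (P.index i)) := mod_cast P.card_block_index_pos i
  have h := P.norm_sq_sum_dilate he d (Finset.singleton_subset_iff.mpr (P.mem_block_index i))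
  rw [Finset.sum_singleton, Finset.card_singleton, Nat.cast_one, one_pow, one_mul] at h
  rw [h]
  gcongr
  rw [div_le_iff₀' hcard]
  linarith

lemma norm_dilate_mul_norm_dilate_le (he : Orthonormal 𝕜 e) {c d : κ → 𝕜} {i : ι} {δ : ℝ}
    (hδ : 0 ≤ δ) (hd : ‖d (P.index i)‖ ≤ 1)
    (hc : ‖c (P.index i)‖ ^ 2 ≤ 1 + #(P.block (P.index i)) * δ) :
    ‖P.dilate d e i‖ * ‖P.dilate c e i‖ ≤ 1 + δ := by
  have hd_sq : ‖P.dilate d e i‖ ^ 2 ≤ 1 + 0 := P.norm_sq_dilate_le he (by simpa using hd)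
  have hd_one : ‖P.dilate d e i‖ ≤ 1 := by simpa using hd_sq
  calc ‖P.dilate d e i‖ * ‖P.dilate c e i‖
      ≤ ‖P.dilate c e i‖ := mul_le_of_le_one_left (norm_nonneg _) hd_one
    _ ≤ √(1 + δ) := Real.le_sqrt_of_sq_le (P.norm_sq_dilate_le he hc)
    _ ≤ 1 + δ := Real.sqrt_le_self_iff.mpr (.inr (le_add_of_nonneg_right hδ))

lemma isMarkushevichBasis_dilate [DecidableEq ι] (he : Orthonormal 𝕜 e)
    (hspan : (Submodule.span 𝕜 (Set.range e)).topologicalClosure = ⊤) {c d : κ → 𝕜}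
    (hcd : ∀ k, conj (c k) * d k = 1) :
    IsMarkushevichBasis 𝕜 (P.dilate d e) fun i ↦ innerSL 𝕜 (P.dilate c e i) := by
  classical
  have hc (k : κ) : c k ≠ 0 := fun h ↦ by simpa [h] using hcd k
  have hd (k : κ) : d k ≠ 0 := right_ne_zero_of_mul_eq_one (hcd k)
  refine isMarkushevichBasis_innerSL (fun i j ↦ ?_) ?_ ?_
  · rw [P.inner_dilate_dilate he, hcd, sub_self, zero_div, ite_self, add_zero]
  · rwa [P.span_range_dilate hd]
  · rwa [P.span_range_dilate hc]

lemma norm_sum_block_lt_norm_sum_half (he : Orthonormal 𝕜 e) {d : κ → 𝕜} {k : κ} {s : Finset ι}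
    (hs : s ⊆ P.block k) (hne : s.Nonempty) (hcard : #(P.block k) = 2 * #s) {C : ℝ}
    (hC : 2 * |C| * ‖d k‖ < 1) :
    C * ‖∑ i ∈ P.block k, P.dilate d e i‖ < ‖∑ i ∈ s, P.dilate d e i‖ := by
  have : (0 : ℝ) < #s := mod_cast hne.card_pos
  have hfull : ‖∑ i ∈ P.block k, P.dilate d e i‖ ^ 2 = 2 * #s * ‖d k‖ ^ 2 := by
    rw [P.norm_sq_sum_dilate he d subset_rfl, hcard]
    push_cast
    field_simp
    ring
  have hhalf : ‖∑ i ∈ s, P.dilate d e i‖ ^ 2 = #s / 2 * (1 + ‖d k‖ ^ 2) := by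
    rw [P.norm_sq_sum_dilate he d hs, hcard]
    push_cast
    field_simp
    ring
  refine lt_of_abs_lt (abs_lt_of_sq_lt_sq ?_ (norm_nonneg _))
  calc (C * ‖∑ i ∈ P.block k, P.dilate d e i‖) ^ 2
      = (#s : ℝ) / 2 * (2 * |C| * ‖d k‖) ^ 2 := by
        rw [mul_pow, hfull, mul_pow _ ‖d k‖, mul_pow 2, sq_abs]
        ring
    _ < (#s : ℝ) / 2 * 1 := by
        gcongr
        exact pow_lt_one₀ (by positivity) hC two_ne_zero
    _ ≤ (#s : ℝ) / 2 * (1 + ‖d k‖ ^ 2) := by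
        gcongr
        exact le_add_of_nonneg_right (sq_nonneg _)
    _ = ‖∑ i ∈ s, P.dilate d e i‖ ^ 2 := hhalf.symm

lemma hasUnboundedInitialSums_dilate (he : Orthonormal 𝕜 e) {d : κ → 𝕜} {l : Filter κ}
    (hP : ∃ᶠ k in l, Even #(P.block k) ∧ (P.block k).Nonempty) (hd : Tendsto d l (𝓝 0))
    (σ : ℕ ≃ ι) : HasUnboundedInitialSums fun ν ↦ P.dilate d e (σ ν) := by
  intro C
  have hsmall : ∀ᶠ k in l, 2 * |C| * ‖d k‖ < 1 := by
    have h : Tendsto (fun k ↦ 2 * |C| * ‖d k‖) l (𝓝 0) := by simpa using hd.norm.const_mul (2 * |C|)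
    exact h.eventually_lt_const one_pos
  obtain ⟨k, ⟨⟨N, hN⟩, hne⟩, hk⟩ := (hP.and_eventually hsmall).exists
  have hN₀ : 0 < N := by have := hne.card_pos; omega
  obtain ⟨F, hF⟩ : ∃ F : Finset ℕ, F.map σ.toEmbedding = P.block k :=
    ⟨(P.block k).map σ.symm.toEmbedding, by ext; simp⟩
  have hcard : #F = N + N := by rw [← hN, ← hF, Finset.card_map]
  obtain ⟨m, hm⟩ := exists_card_filter_lt_eq F (k := N) (by omega)
  have hlt := P.norm_sum_block_lt_norm_sum_half he (s := ({ν ∈ F | ν < m}).map σ.toEmbedding)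
    (hF ▸ Finset.map_subset_map.mpr (F.filter_subset _))
    (Finset.card_pos.mp (by rwa [Finset.card_map, hm])) (by rw [Finset.card_map]; omega) hk
  rw [← hF, Finset.sum_map, Finset.sum_map] at hlt
  exact ⟨F, m, hlt⟩

end InnerProductSpace

end BlockPartition

section Dyadic

/-- The partition of `ℕ` into the dyadic blocks `{n | 2 ^ j ≤ n + 1 < 2 ^ (j + 1)}`. -/
def dyadicBlocks : BlockPartition ℕ ℕ where
  index n := Nat.log 2 (n + 1)
  block j := Finset.Ico (2 ^ j - 1) (2 ^ (j + 1) - 1)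
  mem_block {n j} := by
    have := Nat.one_le_two_pow (n := j)
    rw [Finset.mem_Ico, Nat.log_eq_iff (.inr ⟨one_lt_two, n.succ_ne_zero⟩)]
    omega

lemma card_block_dyadicBlocks (j : ℕ) : #(dyadicBlocks.block j) = 2 ^ j := by
  rw [dyadicBlocks, Nat.card_Ico, pow_succ]
  omega

lemma block_dyadicBlocks_nonempty (j : ℕ) : (dyadicBlocks.block j).Nonempty := by
  rw [← Finset.card_pos, card_block_dyadicBlocks]
  positivity

lemma even_card_block_dyadicBlocks {j : ℕ} (hj : j ≠ 0) : Even #(dyadicBlocks.block j) := by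
  rw [card_block_dyadicBlocks]
  exact even_two.pow_of_ne_zero hj

variable {ε : ℕ → ℝ}

lemma tendsto_two_pow_mul_of_mem_dyadicBlocks (hε : ∀ n, 0 ≤ ε n)
    (hlim : Tendsto (fun n : ℕ ↦ (n : ℝ) * ε n) atTop atTop) {n : ℕ → ℕ}
    (hn : ∀ j, n j ∈ dyadicBlocks.block j) : Tendsto (fun j ↦ 2 ^ j * ε (n j)) atTop atTop := by
  have hbounds (j : ℕ) : j ≤ n j ∧ n j ≤ 2 * 2 ^ j := by
    have hmem := Finset.mem_Ico.mp (hn j)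
    have := Nat.lt_two_pow_self (n := j)
    have := pow_succ 2 j
    omega
  have hn_top : Tendsto n atTop atTop := tendsto_atTop_mono (fun j ↦ (hbounds j).1) tendsto_id
  refine tendsto_atTop_mono (fun j ↦ ?_) ((hlim.comp hn_top).atTop_div_const two_pos)
  have hle : (n j : ℝ) ≤ 2 * 2 ^ j := mod_cast (hbounds j).2
  have := mul_le_mul_of_nonneg_right hle (hε (n j))
  rw [Function.comp_apply]
  linarith

lemma exists_dyadic_weights_tendsto_atTop (hε : ∀ n, 0 ≤ ε n)
    (hlim : Tendsto (fun n : ℕ ↦ (n : ℝ) * ε n) atTop atTop) :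
    ∃ t : ℕ → ℝ, (∀ j, 1 ≤ t j) ∧
      (∀ n, t (dyadicBlocks.index n) ^ 2 ≤
        1 + #(dyadicBlocks.block (dyadicBlocks.index n)) * ε n) ∧
      Tendsto t atTop atTop := by
  choose n hn hmin using fun j ↦
    (dyadicBlocks.block j).exists_min_image ε (block_dyadicBlocks_nonempty j)
  have hnonneg (j : ℕ) : 0 ≤ 2 ^ j * ε (n j) := mul_nonneg (by positivity) (hε _)
  refine ⟨fun j ↦ √(1 + 2 ^ j * ε (n j)), fun j ↦ ?_, fun i ↦ ?_, ?_⟩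
  · exact Real.one_le_sqrt.mpr (le_add_of_nonneg_right (hnonneg j))
  · rw [Real.sq_sqrt (add_nonneg zero_le_one (hnonneg _)), card_block_dyadicBlocks]
    push_cast
    gcongr
    exact hmin _ i (dyadicBlocks.mem_block_index i)
  · exact Real.tendsto_sqrt_atTop.comp <|
      tendsto_atTop_add_const_left _ 1 (tendsto_two_pow_mul_of_mem_dyadicBlocks hε hlim hn)

end Dyadic

theorem exists_bounded_Mbasis_no_permutation_Schauder_l2_general {𝕜 H : Type*} [RCLike 𝕜]
    [NormedAddCommGroup H] [InnerProductSpace 𝕜 H] {e : ℕ → H} (he : Orthonormal 𝕜 e)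
    (hspan : (Submodule.span 𝕜 (Set.range e)).topologicalClosure = ⊤) {ε : ℕ → ℝ}
    (hε : ∀ n, 0 ≤ ε n) (hlim : Tendsto (fun n : ℕ ↦ (n : ℝ) * ε n) atTop atTop) :
    ∃ (x : ℕ → H) (xs : ℕ → H →L[𝕜] 𝕜), IsMarkushevichBasis 𝕜 x xs ∧
      (∀ n, ‖x n‖ * ‖xs n‖ ≤ 1 + ε n) ∧
      ∀ σ : Equiv.Perm ℕ, HasUnboundedInitialSums fun ν ↦ x (σ ν) := by
  obtain ⟨t, ht_one, ht_sq, ht_top⟩ := exists_dyadic_weights_tendsto_atTop hε hlim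
  have ht_pos (j : ℕ) : 0 < t j := one_pos.trans_le (ht_one j)
  let c : ℕ → 𝕜 := fun j ↦ (t j : 𝕜)
  let d : ℕ → 𝕜 := fun j ↦ ((t j)⁻¹ : ℝ)
  refine ⟨dyadicBlocks.dilate d e, fun n ↦ innerSL 𝕜 (dyadicBlocks.dilate c e n),
    dyadicBlocks.isMarkushevichBasis_dilate he hspan fun j ↦ ?_, fun n ↦ ?_, fun σ ↦ ?_⟩
  · simp [c, d, (ht_pos j).ne']
  · rw [innerSL_apply_norm]
    refine dyadicBlocks.norm_dilate_mul_norm_dilate_le he (hε n) ?_ ?_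
    · simpa [d, abs_of_pos (ht_pos _)] using inv_le_one_of_one_le₀ (ht_one _)
    · simpa [c] using ht_sq n
  · refine dyadicBlocks.hasUnboundedInitialSums_dilate he (l := atTop) ?_ ?_ σ
    · exact (eventually_ne_atTop 0).frequently.mono fun j hj ↦
        ⟨even_card_block_dyadicBlocks hj, block_dyadicBlocks_nonempty j⟩
    · have h := (RCLike.continuous_ofReal (K := 𝕜)).tendsto 0
      rw [RCLike.ofReal_zero] at h
      exact h.comp ht_top.inv_tendsto_atTop

/-- If `ε n > 0` and `n · ε n → ∞`, then there exists a `(1+ε n)`-bounded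
Markushevich basis `(xₙ, xₙ*)` of the real Hilbert space `ℓ²` such that for every
permutation `σ` of `ℕ` and every `C ≥ 1` there are finite sets `E ⊆ F` (every element of
`E` smaller than every element of `F \ E`) and signs `δ ν ∈ {−1,1}` with
`‖Σ_{ν∈E} δ ν • x (σ ν)‖ ≥ C · ‖Σ_{ν∈F} δ ν • x (σ ν)‖`; in particular no permutation of
`(xₙ)` satisfies a uniform partial-sum bound. -/
theorem exists_bounded_Mbasis_no_permutation_Schauder_l2
    (ε : ℕ → ℝ) (hε : ∀ n, 0 < ε n)
    (hlim : Filter.Tendsto (fun n : ℕ => (n : ℝ) * ε n) Filter.atTop Filter.atTop) :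
    ∃ (x : ℕ → lp (fun _ : ℕ => ℝ) 2)
      (xs : ℕ → (lp (fun _ : ℕ => ℝ) 2) →L[ℝ] ℝ),
      (∀ m n, xs m (x n) = if m = n then 1 else 0) ∧
      (Submodule.span ℝ (Set.range x)).topologicalClosure = ⊤ ∧
      (∀ v : lp (fun _ : ℕ => ℝ) 2, (∀ n, xs n v = 0) → v = 0) ∧
      (∀ n, ‖x n‖ * ‖xs n‖ ≤ 1 + ε n) ∧
      (∀ σ : Equiv.Perm ℕ, ∀ C : ℝ, 1 ≤ C →
        ∃ (E F : Finset ℕ) (δ : ℕ → ℝ),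
          E ⊆ F ∧
          (∀ ν ∈ E, ∀ l ∈ F \ E, ν < l) ∧
          (∀ ν ∈ F, δ ν = 1 ∨ δ ν = -1) ∧
          C * ‖∑ ν ∈ F, δ ν • x (σ ν)‖ ≤ ‖∑ ν ∈ E, δ ν • x (σ ν)‖) ∧
      (∀ σ : Equiv.Perm ℕ, ¬ ∃ C : ℝ,
        ∀ m n : ℕ, m ≤ n → ∀ a : ℕ → ℝ,
          ‖∑ i ∈ Finset.range m, a i • x (σ i)‖ ≤
            C * ‖∑ i ∈ Finset.range n, a i • x (σ i)‖) := by
  obtain ⟨x, xs, hx, hbound, hσ⟩ := exists_bounded_Mbasis_no_permutation_Schauder_l2_general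
    (HilbertBasis.ofRepr (.refl ℝ (lp (fun _ : ℕ ↦ ℝ) 2))).orthonormal
    (HilbertBasis.dense_span _) (fun n ↦ (hε n).le) hlim
  exact ⟨x, xs, hx.biorthogonal, hx.fundamental, hx.total, hbound,
    fun σ C _ ↦ (hσ σ).exists_signed_sums ℝ C, fun σ ↦ (hσ σ).not_partialSumBound ℝ⟩
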